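/- Let n ≥ 2, let U ⊆ ℝⁿ be an open set, and let S : ℝⁿ → Matrix (Fin n) (Fin n) ℝ be continuous with S(x) symmetric for every x. Suppose that for every smooth compactly supported map T : ℝⁿ → Matrix (Fin n) (Fin n) ℝ with support contained in U and with T(x) symmetric for every x, one has ∫ (Tr(T(x)·S(x)) − Tr(T(x))·Tr(S(x))) dx = 0 (integral over ℝⁿ with Lebesgue measure). Then S(x) = 0 for every x ∈ U. -/

import Mathlib

open Matrix MeasureTheory

/-!
Testing against `T = g • A` with `g` a scalar bump function and `A` a constant symmetric matrix
reduces the claim to the pointwise identity `Tr(A S) = Tr(A) Tr(S)` on `U`, for all symmetric `A`.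
Taking `A = 1` gives `(n - 1) Tr(S) = 0`, so `S` is trace-free; the matrices
`A = Eᵢⱼ + Eⱼᵢ` then show that the symmetric part of `S` vanishes.
-/

section TracePairing

variable {m R : Type*} [Fintype m] [CommRing R]

/-- The bilinear form `Tr(AB) - Tr(A) Tr(B)` on square matrices, which is the integrand of the
orthogonality condition on a tensor field. -/
def tracePairing (A B : Matrix m m R) : R :=
  (A * B).trace - A.trace * B.trace

theorem tracePairing_smul_left (c : R) (A B : Matrix m m R) :
    tracePairing (c • A) B = c • tracePairing A B := by
  simp only [tracePairing, smul_mul, trace_smul, smul_eq_mul]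
  ring

theorem tracePairing_one_left [DecidableEq m] (B : Matrix m m R) :
    tracePairing 1 B = (1 - (Fintype.card m : R)) * B.trace := by
  simp only [tracePairing, one_mul, trace_one]
  ring

theorem tracePairing_single_add_single_left [DecidableEq m] {B : Matrix m m R}
    (hB : B.trace = 0) (i j : m) :
    tracePairing (single i j 1 + single j i 1) B = B j i + B i j := by
  simp only [tracePairing, hB, mul_zero, sub_zero, add_mul, trace_add, trace_single_mul, one_smul]

theorem transpose_eq_neg_of_forall_isSymm_tracePairing_eq_zero [NoZeroDivisors R]
    (hm : (Fintype.card m : R) ≠ 1) {B : Matrix m m R}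
    (h : ∀ A : Matrix m m R, A.IsSymm → tracePairing A B = 0) : Bᵀ = -B := by
  classical
  have trace_eq_zero : B.trace = 0 := by
    have h_one := h 1 isSymm_one
    rw [tracePairing_one_left] at h_one
    exact (mul_eq_zero.mp h_one).resolve_left (sub_ne_zero.mpr hm.symm)
  ext i j
  have isSymm_test : (single i j (1 : R) + single j i 1).IsSymm := by
    simpa only [transpose_single] using isSymm_add_transpose_self (single i j (1 : R))
  have h_entries := h _ isSymm_test
  rw [tracePairing_single_add_single_left trace_eq_zero] at h_entries
  exact eq_neg_of_add_eq_zero_left h_entries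

theorem continuousOn_tracePairing_right {X : Type*} [TopologicalSpace X] [TopologicalSpace R]
    [IsTopologicalRing R] {S : X → Matrix m m R} {U : Set X} (hS : ContinuousOn S U)
    (A : Matrix m m R) : ContinuousOn (fun x ↦ tracePairing A (S x)) U := by
  have continuous_pairing : Continuous (fun B : Matrix m m R ↦ tracePairing A B) :=
    (continuous_const.matrix_mul continuous_id).matrix_trace.sub
      (continuous_const.mul continuous_id.matrix_trace)
  exact continuous_pairing.comp_continuousOn hS

end TracePairing

theorem eq_zero_of_isSymm_of_transpose_eq_neg {m α : Type*} [AddGroup α] [IsAddTorsionFree α]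
    {B : Matrix m m α} (hB : B.IsSymm) (hB_neg : Bᵀ = -B) : B = 0 := by
  ext i j
  exact self_eq_neg.mp (congr_fun₂ (hB.eq.symm.trans hB_neg) i j)

section TestFunctions

open scoped ContDiff

variable {E : Type*} [NormedAddCommGroup E] [NormedSpace ℝ E] [FiniteDimensional ℝ E]
  [MeasurableSpace E] [BorelSpace E] {μ : Measure E} [IsLocallyFiniteMeasure μ]
  [μ.IsOpenPosMeasure] {U : Set E}

theorem eqOn_zero_of_integral_contDiff_smul_eq_zero {F : Type*} [NormedAddCommGroup F]
    [NormedSpace ℝ F] [CompleteSpace F] {f : E → F} (hU : IsOpen U) (hf : ContinuousOn f U)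
    (h : ∀ g : E → ℝ, ContDiff ℝ ∞ g → HasCompactSupport g → tsupport g ⊆ U →
      ∫ x, g x • f x ∂μ = 0) :
    U.EqOn f 0 := by
  have ae_eq_zero : ∀ᵐ x ∂μ, x ∈ U → f x = 0 :=
    hU.ae_eq_zero_of_integral_contDiff_smul_eq_zero (hf.locallyIntegrableOn hU.measurableSet) h
  exact Measure.eqOn_open_of_ae_eq ((ae_restrict_iff' hU.measurableSet).mpr ae_eq_zero) hU hf
    continuousOn_const

theorem stmt8_general {m : Type*} [Fintype m] (hm : Fintype.card m ≠ 1) (hU : IsOpen U)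
    {S : E → Matrix m m ℝ} (hS : ContinuousOn S U)
    (h : ∀ T : E → Matrix m m ℝ, (∀ i j, ContDiff ℝ ∞ fun x ↦ T x i j) → HasCompactSupport T →
      tsupport T ⊆ U → (∀ x, (T x).IsSymm) → ∫ x, tracePairing (T x) (S x) ∂μ = 0) :
    ∀ x ∈ U, (S x)ᵀ = -S x := by
  intro x hx
  refine transpose_eq_neg_of_forall_isSymm_tracePairing_eq_zero (mod_cast hm) fun A hA ↦ ?_
  refine eqOn_zero_of_integral_contDiff_smul_eq_zero (μ := μ) hU
    (continuousOn_tracePairing_right hS A) (fun g hg g_compact g_supp ↦ ?_) hx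
  simp only [← tracePairing_smul_left]
  exact h (fun x ↦ g x • A) (fun i j ↦ hg.mul contDiff_const) g_compact.smul_right
    ((tsupport_smul_subset_left g _).trans g_supp) (fun x ↦ hA.smul (g x))

end TestFunctions

/-- Euclidean version of Lemma 2.4: if a continuous symmetric-matrix-valued `S` on `ℝⁿ`
(`n ≥ 2`) satisfies `∫ (Tr(T·S) − Tr(T)·Tr(S)) = 0` for every smooth compactly
supported symmetric-matrix-valued `T` with support in the open set `U`, then `S`
vanishes on `U`. -/
theorem stmt8 (n : ℕ) (hn : 2 ≤ n) (U : Set (Fin n → ℝ)) (hU : IsOpen U)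
    (S : (Fin n → ℝ) → Matrix (Fin n) (Fin n) ℝ)
    (hScont : ∀ i j, Continuous (fun x => S x i j))
    (hSsymm : ∀ x, (S x)ᵀ = S x)
    (h : ∀ T : (Fin n → ℝ) → Matrix (Fin n) (Fin n) ℝ,
      (∀ i j, ContDiff ℝ (⊤ : ℕ∞) (fun x => T x i j)) →
      HasCompactSupport T →
      tsupport T ⊆ U →
      (∀ x, (T x)ᵀ = T x) →
      ∫ x, ((T x * S x).trace - (T x).trace * (S x).trace) = 0) :
    ∀ x ∈ U, S x = 0 := by
  have card_ne_one : Fintype.card (Fin n) ≠ 1 := by rw [Fintype.card_fin]; lia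
  exact fun x hx ↦ eq_zero_of_isSymm_of_transpose_eq_neg (hSsymm x)
    (stmt8_general card_ne_one hU (continuous_matrix hScont).continuousOn h x hx)
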